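/- arXiv:1201.4995 — 2 statements merged into one kernel-verified Lean document; each statement's English description precedes it below -/
import Mathlib

section
/- Let G be a finite simple graph on n vertices with n ≥ 3, let v be a vertex of G, and let G' be the pendant extension of G at v, with new vertex u. Then G' contains a walk from v to u of length at most n+1 that visits every vertex of G' if and only if G has a Hamiltonian cycle. (This is the token-counting core of Metatheorem 1b: with n+1 tokens and a toll on every path, the avatar can traverse all n+1 locations and end at u exactly when a Hamiltonian cycle exists.) -/
/-!
Contracting the pendant edge (sending the new vertex `u` to `v`) turns a walk of the extension into
a walk of `G` through the same vertices of `G`. A walk that ends at `u` and starts elsewhere loses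
at least one edge, so a walk from `v` to `u` with at most `n + 1` edges yields a closed walk at `v`
with at most `n` edges that still covers `G` (`exists_walk_of_pendantExtension`). Apart from its
starting vertex, this closed walk lists at most `n` vertices, and these are all `n` vertices of
`G`; hence there are no repetitions, and since `n ≥ 3` the walk is a Hamiltonian cycle
(`isHamiltonianCycle_of_covering`). Conversely, a Hamiltonian cycle rotated to start at `v` and
followed by the pendant edge is a covering walk of length `n + 1`.
-/

/-- The pendant extension of `G` at `v`: add one new vertex `u = Sum.inr ()`
adjacent to `v` and to no other vertex. -/
def pendantExtension {V : Type*} (G : SimpleGraph V) (v : V) : SimpleGraph (V ⊕ Unit) :=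
  SimpleGraph.fromRel (fun x y =>
    (∃ a b, x = Sum.inl a ∧ y = Sum.inl b ∧ G.Adj a b) ∨
    (x = Sum.inl v ∧ y = Sum.inr ()))

open SimpleGraph

section PendantExtension

variable {V : Type*} {G : SimpleGraph V} {v : V}

lemma pendantExtension_adj_inl_inl {a b : V} :
    (pendantExtension G v).Adj (Sum.inl a) (Sum.inl b) ↔ G.Adj a b := by
  simp only [pendantExtension, fromRel_adj]
  constructor
  · rintro ⟨_, (⟨_, _, h1, h2, h⟩ | ⟨_, h⟩) | (⟨_, _, h1, h2, h⟩ | ⟨_, h⟩)⟩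
    · cases h1; cases h2; exact h
    · cases h
    · cases h1; cases h2; exact h.symm
    · cases h
  · intro h
    exact ⟨by simpa using h.ne, Or.inl (Or.inl ⟨a, b, rfl, rfl, h⟩)⟩

lemma pendantExtension_adj_inl_inr {a : V} {t : Unit} :
    (pendantExtension G v).Adj (Sum.inl a) (Sum.inr t) ↔ a = v := by
  simp [pendantExtension]

/-- Contraction of the pendant edge. The summand `1` accounts for the last step into the pendant
vertex, which a walk starting at a vertex of `G` must make; counting it only for such starting
points is what makes the induction on the walk go through. -/
lemma exists_walk_of_pendantExtension {x y : V ⊕ Unit} (W : (pendantExtension G v).Walk x y)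
    (hy : y = Sum.inr ()) :
    ∃ p : G.Walk (Sum.elim id (fun _ => v) x) v,
      p.length + (if x.isLeft then 1 else 0) ≤ W.length ∧
        ∀ a, Sum.inl a ∈ W.support → a ∈ p.support := by
  induction W with
  | nil => subst hy; exact ⟨Walk.nil, by simp, by simp⟩
  | @cons x z y h W ih =>
    obtain ⟨p, hl, hs⟩ := ih hy
    rcases x with a | ⟨⟩ <;> rcases z with b | ⟨⟩
    · change G.Walk b v at p
      change ∃ p : G.Walk a v, _
      refine ⟨Walk.cons (pendantExtension_adj_inl_inl.1 h) p, by simpa using hl, ?_⟩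
      intro c hc
      simp only [Walk.support_cons, List.mem_cons, Sum.inl.injEq] at hc
      exact List.mem_cons.2 (hc.imp id (hs c))
    · obtain rfl := pendantExtension_adj_inl_inr.1 h
      refine ⟨p, by simpa using hl, ?_⟩
      intro c hc
      simp only [Walk.support_cons, List.mem_cons, Sum.inl.injEq] at hc
      rcases hc with rfl | hc
      · exact p.start_mem_support
      · exact hs c hc
    · obtain rfl := pendantExtension_adj_inl_inr.1 h.symm
      refine ⟨p, by simp at hl ⊢; omega, ?_⟩
      intro c hc
      simp only [Walk.support_cons, List.mem_cons, reduceCtorEq, false_or] at hc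
      exact hs c hc
    · exact absurd h (SimpleGraph.irrefl _)

/-- The inclusion of `G` into its pendant extension. -/
def pendantInl (G : SimpleGraph V) (v : V) : G →g pendantExtension G v where
  toFun := Sum.inl
  map_rel' h := pendantExtension_adj_inl_inl.2 h

end PendantExtension

/-- The vertices after the first one form a list of at most `n` entries that covers the `n` vertices
of `G`, so it has no repetitions. -/
lemma isHamiltonianCycle_of_covering {V : Type*} [Fintype V] [DecidableEq V] {G : SimpleGraph V}
    (hn : 3 ≤ Fintype.card V) {v : V} (p : G.Walk v v) (hl : p.length ≤ Fintype.card V)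
    (hs : ∀ a, a ∈ p.support) : p.IsHamiltonianCycle := by
  cases p with
  | nil =>
    have : Subsingleton V := ⟨fun a b => by
      have ha := hs a; have hb := hs b
      simp at ha hb; rw [ha, hb]⟩
    have := Fintype.card_le_one_iff_subsingleton.2 this
    omega
  | @cons _ w _ h q =>
    have hq : ∀ a, a ∈ q.support := by
      intro a
      rcases List.mem_cons.1 (hs a) with rfl | ha
      · exact q.end_mem_support
      · exact ha
    have huniv : q.support.toFinset = Finset.univ := by
      ext a; simp [hq a]
    have hcard : q.support.toFinset.card = Fintype.card V := by
      rw [huniv, Finset.card_univ]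
    have hle := q.support.toFinset_card_le
    have hlen := q.length_support
    rw [Walk.length_cons] at hl
    have hpath : q.IsPath := Walk.IsPath.mk' <|
      Multiset.coe_nodup.1 <| Multiset.toFinset_card_eq_card_iff_nodup.1 <| by
        change q.support.toFinset.card = q.support.length
        omega
    rw [Walk.isHamiltonianCycle_iff_isCycle_and_length_eq,
      Walk.isCycle_iff_isPath_tail_and_le_length]
    refine ⟨⟨by simpa using hpath, ?_⟩, ?_⟩ <;> rw [Walk.length_cons] <;> omega

theorem stmt_4 {V : Type*} [Fintype V] [DecidableEq V] (G : SimpleGraph V)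
    (hn : 3 ≤ Fintype.card V) (v : V) :
    (∃ W : (pendantExtension G v).Walk (Sum.inl v) (Sum.inr ()),
        W.length ≤ Fintype.card V + 1 ∧ ∀ x : V ⊕ Unit, x ∈ W.support) ↔
    (∃ (x : V) (c : G.Walk x x), c.IsHamiltonianCycle) := by
  constructor
  · rintro ⟨W, hl, hs⟩
    obtain ⟨p, hp, hps⟩ := exists_walk_of_pendantExtension W rfl
    change G.Walk v v at p
    simp only [Sum.isLeft_inl, if_true] at hp
    exact ⟨v, p, isHamiltonianCycle_of_covering hn p
      (Nat.le_of_add_le_add_right (hp.trans hl)) fun a => hps a (hs _)⟩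
  · rintro ⟨x, c, hc⟩
    have hr := hc.rotate (hc.mem_support v)
    let d := (c.rotate v (hc.mem_support v)).map (pendantInl G v)
    have hadj : (pendantExtension G v).Adj (pendantInl G v v) (Sum.inr ()) :=
      pendantExtension_adj_inl_inr.2 rfl
    have hlen : (d.concat hadj).length = Fintype.card V + 1 := by
      rw [Walk.length_concat, Walk.length_map, hr.length_eq]
    have hcov : ∀ a, Sum.inl a ∈ (d.concat hadj).support := fun a => by
      rw [Walk.support_concat, Walk.support_map]
      exact List.mem_append_left _ (List.mem_map.2 ⟨a, hr.mem_support a, rfl⟩)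
    refine ⟨d.concat hadj, hlen.le, ?_⟩
    rintro (a | ⟨⟩)
    · exact hcov a
    · exact Walk.end_mem_support _
end

section
/- Let G be a finite simple graph on n vertices with n ≥ 2, let v be a vertex of G, and let G' be the pendant extension of G at v, with new vertex u. If W is a walk in G' from v to u of length at most n+1 that visits every vertex of G', then W has length exactly n+1, u occurs exactly once in the vertex sequence of W, v occurs exactly twice, and every other vertex of G occurs exactly once. (This is the structural counting claim in the proof of Metatheorem 1b.a: since there are exactly n+1 tokens, at most one location may be visited twice, and it must be the starting location.) -/
lemma pendantExtension_adj_inr {V : Type*} {G : SimpleGraph V} {v : V} {x : V ⊕ Unit}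
    (h : (pendantExtension G v).Adj x (Sum.inr ())) : x = Sum.inl v := by
  simp [pendantExtension] at h
  exact h.2

/-- The multiplicities in the theorem are taken with the derived `BEq` instance on the sum type;
it has to be known lawful before the lemmas on `List.count` apply. -/
instance sumLawfulBEq {V : Type*} [DecidableEq V] : LawfulBEq (V ⊕ Unit) where
  eq_of_beq {x y} h := by
    rcases x with a | a <;> rcases y with b | b
    · exact congrArg Sum.inl (eq_of_beq (α := V) h)
    · cases h
    · cases h
    · rfl
  rfl {x} := by
    rcases x with a | a
    · exact beq_self_eq_true a
    · rfl

lemma two_le_count_start {V : Type*} [Fintype V] [DecidableEq V] (G : SimpleGraph V)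
    (hn : 2 ≤ Fintype.card V) (v : V)
    (W : (pendantExtension G v).Walk (Sum.inl v) (Sum.inr ()))
    (hvisit : ∀ x : V ⊕ Unit, x ∈ W.support) :
    2 ≤ W.support.count (Sum.inl v) := by
  cases W with
  | cons h p =>
    rw [SimpleGraph.Walk.support_cons, List.count_cons_self]
    suffices hv : Sum.inl v ∈ p.support by
      have := List.count_pos_iff.mpr hv
      omega
    by_cases hp : p.Nil
    · have : Nontrivial V := Fintype.one_lt_card_iff_nontrivial.mp hn
      obtain ⟨w, hw⟩ := exists_ne v
      have hwW := hvisit (Sum.inl w)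
      cases hp
      simp [hw] at hwW
    · rw [← pendantExtension_adj_inr (p.adj_penultimate hp)]
      exact p.getVert_mem_support _

theorem stmt_5 {V : Type*} [Fintype V] [DecidableEq V] (G : SimpleGraph V)
    (hn : 2 ≤ Fintype.card V) (v : V)
    (W : (pendantExtension G v).Walk (Sum.inl v) (Sum.inr ()))
    (hlen : W.length ≤ Fintype.card V + 1)
    (hvisit : ∀ x : V ⊕ Unit, x ∈ W.support) :
    W.length = Fintype.card V + 1 ∧
    W.support.count (Sum.inr ()) = 1 ∧
    W.support.count (Sum.inl v) = 2 ∧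
    ∀ w : V, w ≠ v → W.support.count (Sum.inl w) = 1 := by
  have hsum : ∑ x, W.support.count x = W.length + 1 := by
    rw [← SimpleGraph.Walk.length_support, ← List.sum_toFinset_count_eq_length]
    congr 1
    · ext x
      simp [hvisit x]
    -- The derived `BEq` on the sum versus the one coming from `DecidableEq`.
    · funext x
      congr 1
      exact lawful_beq_subsingleton _ _
  -- The lower bounds on the multiplicities: 2 at `v`, 1 elsewhere.
  let g : V ⊕ Unit → ℕ := fun x => 1 + if x = Sum.inl v then 1 else 0
  have hg : ∑ x, g x = Fintype.card V + 2 := by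
    simp [g, Finset.sum_add_distrib]
  have hle : ∀ x ∈ Finset.univ, g x ≤ W.support.count x := by
    intro x _
    by_cases hx : x = Sum.inl v
    · subst hx
      simpa [g] using two_le_count_start G hn v W hvisit
    · simpa [g, hx] using List.count_pos_iff.mpr (hvisit x)
  have hgf := Finset.sum_le_sum hle
  have heq := (Finset.sum_eq_sum_iff_of_le hle).mp (by omega)
  refine ⟨by omega, ?_, ?_, fun w hw => ?_⟩
  · simpa [g] using (heq (Sum.inr ()) (Finset.mem_univ _)).symm
  · simpa [g] using (heq (Sum.inl v) (Finset.mem_univ _)).symm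
  · simpa [g, hw] using (heq (Sum.inl w) (Finset.mem_univ _)).symm
end
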